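/- The metric G is invariant under reparameterization: if φ : 𝕋 → 𝕋 is an orientation-preserving C¹-diffeomorphism of class H^s and γ ∈ 𝓜 (so that also γ∘φ ∈ 𝓜), then G_{γ∘φ}(u∘φ, v∘φ) = G_γ(u, v) for all u, v ∈ H^s(𝕋, ℝⁿ). -/

import Mathlib

open MeasureTheory Real Filter Set
open scoped ENNReal Topology RealInnerProductSpace

noncomputable section

/-- Euclidean space `ℝⁿ`. -/
abbrev En (n : ℕ) : Type := EuclideanSpace ℝ (Fin n)

/-- A fundamental domain for the circle `𝕋 = ℝ/ℤ`. -/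
def I01 : Set ℝ := Set.Ico (0 : ℝ) 1

/-- The intrinsic distance on `𝕋 = ℝ/ℤ`, expressed for real representatives. -/
def dT (x y : ℝ) : ℝ := ⨅ k : ℤ, |x - y - (k : ℝ)|

/-- Supremum norm of a (periodic) function on the circle. -/
def supNorm {E : Type*} [NormedAddCommGroup E] (f : ℝ → E) : ℝ := ⨆ x : ℝ, ‖f x‖

/-- The squared Gagliardo seminorm `[v]_{H^σ}²` of a function on the circle, valued in `[0,∞]`. -/
def gagliardoSqE {E : Type*} [NormedAddCommGroup E] (σ : ℝ) (v : ℝ → E) : ℝ≥0∞ :=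
  ∫⁻ x in I01, ∫⁻ y in I01, ENNReal.ofReal (‖v y - v x‖ ^ 2 / dT x y ^ (2 * σ + 1))

/-- Membership in the Sobolev–Slobodeckij space `H^s(𝕋, ℝⁿ)`; for `s ∈ (3/2,2)` such
functions have a `C¹` representative, which we take as the defining data. -/
def InHs {n : ℕ} (s : ℝ) (u : ℝ → En n) : Prop :=
  Function.Periodic u 1 ∧ ContDiff ℝ 1 u ∧ gagliardoSqE (s - 1) (deriv u) < ⊤

/-- The squared `H^s` norm `‖u‖²_{L²} + ‖u'‖²_{L²} + [u']²_{H^{s-1}}`. -/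
def HsNormSq {n : ℕ} (s : ℝ) (u : ℝ → En n) : ℝ :=
  (∫ x in I01, ‖u x‖ ^ 2) + (∫ x in I01, ‖deriv u x‖ ^ 2) +
    (gagliardoSqE (s - 1) (deriv u)).toReal

/-- The `H^s` norm. -/
def HsNorm {n : ℕ} (s : ℝ) (u : ℝ → En n) : ℝ := Real.sqrt (HsNormSq s u)

/-- The `H^s` inner product. -/
def HsInner {n : ℕ} (s : ℝ) (u v : ℝ → En n) : ℝ :=
  (∫ x in I01, ⟪u x, v x⟫) + (∫ x in I01, ⟪deriv u x, deriv v x⟫) +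
    ∫ x in I01, ∫ y in I01,
      ⟪deriv u y - deriv u x, deriv v y - deriv v x⟫ / dT x y ^ (2 * (s - 1) + 1)

/-- The manifold `𝓜` of embedded closed curves of class `H^s`: injective (on the circle)
immersions. -/
def InM {n : ℕ} (s : ℝ) (γ : ℝ → En n) : Prop :=
  InHs s γ ∧ Set.InjOn γ I01 ∧ ∀ x, deriv γ x ≠ 0

/-- The length `L(γ)`. -/
def arcLen {n : ℕ} (γ : ℝ → En n) : ℝ := ∫ x in I01, ‖deriv γ x‖

/-- The arc-length distance `d_γ(x,y)`: the length of the shorter of the two arcs of `γ`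
between `x` and `y`. -/
def arcDist {n : ℕ} (γ : ℝ → En n) (x y : ℝ) : ℝ :=
  ⨅ k : ℤ, |∫ t in x..(y + (k : ℝ)), ‖deriv γ t‖|

/-- Derivative with respect to arc length, `D_γ u = u' / |γ'|`. -/
def Dg {n : ℕ} (γ u : ℝ → En n) (x : ℝ) : En n := ‖deriv γ x‖⁻¹ • deriv u x

/-- `𝒟_γ u (x)`, the pointwise linear map `w ↦ |γ'(x)|⁻² ⟪γ'(x), w⟫ u'(x)`. -/
def DDg {n : ℕ} (γ u : ℝ → En n) (x : ℝ) (w : En n) : En n :=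
  ((‖deriv γ x‖ ^ 2)⁻¹ * ⟪deriv γ x, w⟫) • deriv u x

/-- The operator `R^s_γ`. -/
def Rop {n : ℕ} (s : ℝ) (γ u : ℝ → En n) (x y : ℝ) : En n :=
  (‖γ y - γ x‖ ^ s)⁻¹ • (u y - u x - DDg γ u x (γ y - γ x))

/-- Density of the measure `μ_γ` with respect to `λ ⊗ λ` on `𝕋 × 𝕋`. -/
def muW {n : ℕ} (γ : ℝ → En n) (x y : ℝ) : ℝ :=
  ‖deriv γ x‖ * ‖deriv γ y‖ / ‖γ y - γ x‖

/-- Density of the measure `ν_γ` with respect to `λ ⊗ λ` on `𝕋 × 𝕋`. -/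
def nuW {n : ℕ} (γ : ℝ → En n) (x y : ℝ) : ℝ :=
  ‖deriv γ x‖ * ‖deriv γ y‖ / arcDist γ x y

/-- The tangent-point energy, valued in `[0,∞]`. -/
def EtpE {n : ℕ} (s : ℝ) (γ : ℝ → En n) : ℝ≥0∞ :=
  ∫⁻ x in I01, ∫⁻ y in I01, ENNReal.ofReal (‖Rop s γ γ x y‖ ^ 2 * muW γ x y)

/-- The tangent-point energy, real-valued (finite on `𝓜`). -/
def Etp {n : ℕ} (s : ℝ) (γ : ℝ → En n) : ℝ := (EtpE s γ).toReal

/-- `‖R^s_γ u‖²_{L²(ν_γ)}`, valued in `[0,∞]`. -/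
def RnuSqE {n : ℕ} (s : ℝ) (γ u : ℝ → En n) : ℝ≥0∞ :=
  ∫⁻ x in I01, ∫⁻ y in I01, ENNReal.ofReal (‖Rop s γ u x y‖ ^ 2 * nuW γ x y)

/-- `‖R^s_γ u‖²_{L²(ν_γ)}`, real-valued. -/
def RnuSq {n : ℕ} (s : ℝ) (γ u : ℝ → En n) : ℝ := (RnuSqE s γ u).toReal

/-- The squared `γ`-dependent seminorm `[u]²_{H^s(γ)}`, valued in `[0,∞]`. -/
def gagGammaSqE {n : ℕ} (s : ℝ) (γ u : ℝ → En n) : ℝ≥0∞ :=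
  ∫⁻ x in I01, ∫⁻ y in I01,
    ENNReal.ofReal (‖Dg γ u y - Dg γ u x‖ ^ 2 / arcDist γ x y ^ (2 * (s - 1)) * nuW γ x y)

/-- The squared `γ`-dependent seminorm `[u]²_{H^s(γ)}`, real-valued. -/
def gagGammaSq {n : ℕ} (s : ℝ) (γ u : ℝ → En n) : ℝ := (gagGammaSqE s γ u).toReal

/-- The inner product `⟨u,v⟩_{L²(γ)}`. -/
def innerL2g {n : ℕ} (γ u v : ℝ → En n) : ℝ := ∫ x in I01, ⟪u x, v x⟫ * ‖deriv γ x‖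

/-- The inner product `⟨u,v⟩_{H¹(γ)}`. -/
def innerH1g {n : ℕ} (γ u v : ℝ → En n) : ℝ :=
  ∫ x in I01, ⟪Dg γ u x, Dg γ v x⟫ * ‖deriv γ x‖

/-- The squared `γ`-dependent norm `‖u‖²_{H^s(γ)}`. -/
def HsGammaNormSq {n : ℕ} (s : ℝ) (γ u : ℝ → En n) : ℝ :=
  innerL2g γ u u + innerH1g γ u u + gagGammaSq s γ u

/-- The `γ`-dependent norm `‖u‖_{H^s(γ)}`. -/
def HsGammaNorm {n : ℕ} (s : ℝ) (γ u : ℝ → En n) : ℝ := Real.sqrt (HsGammaNormSq s γ u)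

/-- The bilinear form `B¹_γ`. -/
def B1 {n : ℕ} (s : ℝ) (γ u v : ℝ → En n) : ℝ :=
  ∫ x in I01, ∫ y in I01, ⟪Rop s γ u x y, Rop s γ v x y⟫ * muW γ x y

/-- The bilinear form `B²_γ`. -/
def B2 {n : ℕ} (s : ℝ) (γ u v : ℝ → En n) : ℝ :=
  ∫ x in I01, ∫ y in I01,
    ‖Rop s γ γ x y‖ ^ 2 * (⟪u y - u x, v y - v x⟫ / ‖γ y - γ x‖ ^ 2) * muW γ x y

/-- The bilinear form `B³_γ`. -/
def B3 {n : ℕ} (s : ℝ) (γ u v : ℝ → En n) : ℝ :=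
  ∫ x in I01, ∫ y in I01,
    ‖Rop s γ γ x y‖ ^ 2 * (⟪Dg γ u x, Dg γ v x⟫ + ⟪Dg γ u y, Dg γ v y⟫) * muW γ x y

/-- The Riemannian metric `G_γ(u,v)`. -/
def Gmet {n : ℕ} (s : ℝ) (γ u v : ℝ → En n) : ℝ :=
  2 * B1 s γ u v + (2 * s + 1) * B2 s γ u v + B3 s γ u v + innerH1g γ u v + innerL2g γ u v

/-- The distortion `distor(γ) = sup_{x ≠ y} d_γ(x,y)/|γ(y) − γ(x)|`, valued in `[0,∞]`. -/
def distorE {n : ℕ} (γ : ℝ → En n) : ℝ≥0∞ :=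
  ⨆ (x ∈ I01) (y ∈ I01) (_ : x ≠ y), ENNReal.ofReal (arcDist γ x y / ‖γ y - γ x‖)

/-- The distortion, real-valued. -/
def distor {n : ℕ} (γ : ℝ → En n) : ℝ := (distorE γ).toReal

/-- A `C¹` path `[0,1] → 𝓜 ⊂ H^s(𝕋,ℝⁿ)` (with respect to the `H^s` topology), recorded
together with its velocity field `V`. -/
structure C1Path (s : ℝ) (n : ℕ) where
  Γ : ℝ → ℝ → En n
  V : ℝ → ℝ → En n
  mem : ∀ t ∈ Set.Icc (0 : ℝ) 1, InM s (Γ t)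
  memV : ∀ t ∈ Set.Icc (0 : ℝ) 1, InHs s (V t)
  isDeriv : ∀ t ∈ Set.Icc (0 : ℝ) 1,
    Tendsto (fun h : ℝ => HsNorm s fun x => h⁻¹ • (Γ (t + h) x - Γ t x) - V t x)
      (𝓝[{h : ℝ | t + h ∈ Set.Icc (0 : ℝ) 1 ∧ h ≠ 0}] 0) (𝓝 0)
  contV : ∀ t ∈ Set.Icc (0 : ℝ) 1,
    Tendsto (fun τ : ℝ => HsNorm s fun x => V τ x - V t x) (𝓝[Set.Icc (0 : ℝ) 1] t) (𝓝 0)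

/-- Length of a path with respect to `G`. -/
def pathLen {s : ℝ} {n : ℕ} (P : C1Path s n) : ℝ :=
  ∫ t in (0 : ℝ)..1, Real.sqrt (Gmet s (P.Γ t) (P.V t) (P.V t))

/-- The path (Dirichlet) energy of a path with respect to `G`. -/
def pathEnergy {s : ℝ} {n : ℕ} (P : C1Path s n) : ℝ :=
  (1 / 2) * ∫ t in (0 : ℝ)..1, Gmet s (P.Γ t) (P.V t) (P.V t)

/-- The geodesic distance induced by `G`, valued in `[0,∞]` (`∞` if there is no path). -/
def geodDist (s : ℝ) {n : ℕ} (γ₀ γ₁ : ℝ → En n) : ℝ≥0∞ :=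
  ⨅ (P : C1Path s n) (_ : P.Γ 0 = γ₀ ∧ P.Γ 1 = γ₁), ENNReal.ofReal (pathLen P)

/-- `U ⊆ 𝓜` is bounded with respect to the geodesic distance `d_G`. -/
def GBounded (s : ℝ) {n : ℕ} (U : Set (ℝ → En n)) : Prop :=
  (∀ γ ∈ U, InM s γ) ∧
    ∃ γ₀, InM s γ₀ ∧ ∃ R : ℝ, ∀ γ ∈ U, geodDist s γ γ₀ ≤ ENNReal.ofReal R

/-- Weak convergence in the Hilbert space `H^s(𝕋,ℝⁿ)`. -/
def WeakHsTendsto {n : ℕ} (s : ℝ) (γk : ℕ → ℝ → En n) (γ : ℝ → En n) : Prop :=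
  ∀ v : ℝ → En n, InHs s v →
    Tendsto (fun k => HsInner s (γk k) v) atTop (𝓝 (HsInner s γ v))

/-- Directional derivative of `γ ↦ G_γ(u,v)` at `γ` in direction `w`. -/
def DGdir {n : ℕ} (s : ℝ) (γ w u v : ℝ → En n) : ℝ :=
  deriv (fun t : ℝ => Gmet s (fun x => γ x + t • w x) u v) 0

/-- `F'` is the derivative of the path `F` with respect to the `H^s` norm, on `S`. -/
def IsHsDerivOn {n : ℕ} (s : ℝ) (F F' : ℝ → ℝ → En n) (S : Set ℝ) : Prop :=
  ∀ t ∈ S,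
    Tendsto (fun h : ℝ => HsNorm s fun x => h⁻¹ • (F (t + h) x - F t x) - F' t x)
      (𝓝[{h : ℝ | t + h ∈ S ∧ h ≠ 0}] 0) (𝓝 0)

/-- The path `F` is continuous on `S` with respect to the `H^s` norm. -/
def HsContOn {n : ℕ} (s : ℝ) (F : ℝ → ℝ → En n) (S : Set ℝ) : Prop :=
  ∀ t ∈ S, Tendsto (fun τ : ℝ => HsNorm s fun x => F τ x - F t x) (𝓝[S] t) (𝓝 0)

/-- A solution of the geodesic initial value problem on `[0,∞)`, recorded as a triple
(position `Γ`, velocity `V`, acceleration `W`); the geodesic equation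
`Γ̈ + A_Γ(Γ̇)Γ̇ = 0` is expressed weakly via the Koszul formula for the
Christoffel operator `A`. -/
def GeodesicSol {n : ℕ} (s : ℝ) (γ₀ v₀ : ℝ → En n) (Γ V W : ℝ → ℝ → En n) : Prop :=
  (∀ t ∈ Set.Ici (0 : ℝ), InM s (Γ t) ∧ InHs s (V t) ∧ InHs s (W t)) ∧
  Γ 0 = γ₀ ∧ V 0 = v₀ ∧
  IsHsDerivOn s Γ V (Set.Ici 0) ∧ IsHsDerivOn s V W (Set.Ici 0) ∧
  HsContOn s V (Set.Ici 0) ∧ HsContOn s W (Set.Ici 0) ∧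
  ∀ t ∈ Set.Ici (0 : ℝ), ∀ w : ℝ → En n, InHs s w →
    Gmet s (Γ t) (W t) w + DGdir s (Γ t) (V t) (V t) w
      - (1 / 2) * DGdir s (Γ t) w (V t) (V t) = 0

/-!
Differentiating `γ ∘ φ` and `u ∘ φ` produces a common factor `φ'`, which cancels in `D_γ u` and
`𝒟_γ u`. Hence `R^s_{γ∘φ}(u ∘ φ)(x, y) = R^s_γ u (φ x, φ y)`, while `dω` and `dμ` pick up the
Jacobians `φ'(x)` and `φ'(x) φ'(y)`: each term of `G` is invariant by change of variables on `𝕋`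
and `𝕋 × 𝕋`.

That `(γ ∘ φ)' = φ' • (γ' ∘ φ)` has finite `H^{s-1}` seminorm uses two facts: bounded functions of
finite seminorm are stable under products, and a substitution `φ` with `0 < m ≤ φ' ≤ L` changes the
seminorm by at most a constant factor, its Jacobian being at least `m²` and its Lipschitz constant
at most `L`.
-/

section Circle

variable {α : Type*} {x y : ℝ}

lemma dT_eq_abs_sub_round (x y : ℝ) : dT x y = |x - y - round (x - y)| :=
  le_antisymm (ciInf_le ⟨0, by rintro _ ⟨k, rfl⟩; exact abs_nonneg _⟩ (round (x - y)))
    (le_ciInf fun k => round_le _ k)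

lemma dT_eq_dist (x y : ℝ) : dT x y = dist (x : UnitAddCircle) (y : UnitAddCircle) := by
  rw [dT_eq_abs_sub_round, dist_eq_norm, ← AddCircle.coe_sub, UnitAddCircle.norm_eq]

lemma dT_nonneg (x y : ℝ) : 0 ≤ dT x y := dT_eq_dist x y ▸ dist_nonneg

lemma dT_le_abs_sub_sub_intCast (x y : ℝ) (k : ℤ) : dT x y ≤ |x - y - k| :=
  dT_eq_abs_sub_round x y ▸ round_le _ k

lemma dT_add_one_left (x y : ℝ) : dT (x + 1) y = dT x y := by
  rw [dT_eq_dist, dT_eq_dist, AddCircle.coe_add_period]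

lemma dT_add_one_right (x y : ℝ) : dT x (y + 1) = dT x y := by
  rw [dT_eq_dist, dT_eq_dist, AddCircle.coe_add_period]

lemma continuous_dT : Continuous fun p : ℝ × ℝ => dT p.1 p.2 := by
  simp only [dT_eq_dist]
  fun_prop

lemma eq_of_dT_eq_zero {f : ℝ → α} (hf : Function.Periodic f 1) (h : dT x y = 0) :
    f x = f y := by
  rw [dT_eq_dist, dist_eq_zero] at h
  rw [← hf.lift_coe x, h, hf.lift_coe]

lemma injOn_I01_iff {f : ℝ → α} (hf : Function.Periodic f 1) :
    InjOn f I01 ↔ ∀ x y, f x = f y → ∃ k : ℤ, x = y + k := by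
  constructor
  · intro h x y hxy
    have map_fract (z : ℝ) : f (Int.fract z) = f z := by
      rw [← Int.self_sub_floor, ← mul_one (⌊z⌋ : ℝ), hf.sub_int_mul_eq]
    have fract_mem (z : ℝ) : Int.fract z ∈ I01 := ⟨Int.fract_nonneg z, Int.fract_lt_one z⟩
    have hfract : Int.fract x = Int.fract y :=
      h (fract_mem x) (fract_mem y) (by rw [map_fract, map_fract, hxy])
    obtain ⟨k, hk⟩ := Int.fract_eq_fract.1 hfract
    exact ⟨k, by linarith⟩
  · intro h x hx y hy hxy
    obtain ⟨k, rfl⟩ := h x y hxy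
    exact (Int.fract_eq_self.2 hx).symm.trans ((Int.fract_add_intCast y k).trans
      (Int.fract_eq_self.2 hy))

end Circle

section PeriodicFunctions

variable {E : Type*} [NormedAddCommGroup E]

lemma exists_norm_le_of_periodic {f : ℝ → E} (hf : Continuous f) (hp : Function.Periodic f 1) :
    ∃ C, ∀ x, ‖f x‖ ≤ C := by
  obtain ⟨C, hC⟩ := (hp.isBounded_of_continuous one_ne_zero hf).exists_norm_le
  exact ⟨C, fun x => hC _ (mem_range_self x)⟩

lemma restrict_I01 : (volume : Measure ℝ).restrict I01 = volume.restrict (Ioc 0 1) :=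
  Measure.restrict_congr_set Ico_ae_eq_Ioc

lemma setLIntegral_Ioc_eq_I01 {f : ℝ → ℝ≥0∞} (hf : Function.Periodic f 1) (t : ℝ) :
    ∫⁻ x in Ioc t (t + 1), f x = ∫⁻ x in I01, f x := by
  rw [restrict_I01]
  simpa using (UnitAddCircle.lintegral_preimage t hf.lift).trans
    (UnitAddCircle.lintegral_preimage 0 hf.lift).symm

variable [NormedSpace ℝ E]

lemma periodic_deriv {f : ℝ → E} (hf : Function.Periodic f 1) :
    Function.Periodic (deriv f) 1 := fun x => by
  rw [← deriv_comp_add_const, funext hf]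

lemma setIntegral_Ioc_eq_I01 {f : ℝ → E} (hf : Function.Periodic f 1) (t : ℝ) :
    ∫ x in Ioc t (t + 1), f x = ∫ x in I01, f x := by
  rw [restrict_I01]
  simpa using (UnitAddCircle.integral_preimage t hf.lift).trans
    (UnitAddCircle.integral_preimage 0 hf.lift).symm

end PeriodicFunctions

/-- A function of two real variables that is `1`-periodic in each of them, that is, a function
on `𝕋 × 𝕋` expressed for real representatives. -/
structure IsBiperiodic {α : Type*} (F : ℝ → ℝ → α) : Prop where
  left : ∀ x y, F (x + 1) y = F x y
  right : ∀ x y, F x (y + 1) = F x y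

/-- A lift `ℝ → ℝ` of an orientation-preserving `C¹`-diffeomorphism of `𝕋`. -/
structure IsCircleDiffeoLift (φ : ℝ → ℝ) : Prop where
  contDiff : ContDiff ℝ 1 φ
  deriv_pos : ∀ x, 0 < deriv φ x
  map_add_one : ∀ x, φ (x + 1) = φ x + 1

namespace IsCircleDiffeoLift

section ChangeOfVariables

variable {φ : ℝ → ℝ} {α E : Type*} [NormedAddCommGroup E]

lemma differentiable (hφ : IsCircleDiffeoLift φ) : Differentiable ℝ φ :=
  hφ.contDiff.differentiable one_ne_zero

lemma continuous_deriv (hφ : IsCircleDiffeoLift φ) : Continuous (deriv φ) :=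
  hφ.contDiff.continuous_deriv le_rfl

lemma strictMono (hφ : IsCircleDiffeoLift φ) : StrictMono φ := strictMono_of_deriv_pos hφ.deriv_pos

lemma map_add_intCast (hφ : IsCircleDiffeoLift φ) (x : ℝ) (k : ℤ) : φ (x + k) = φ x + k :=
  AddConstMapClass.map_add_int (AddConstMap.mk φ hφ.map_add_one) x k

lemma periodic_comp (hφ : IsCircleDiffeoLift φ) {f : ℝ → α} (hf : Function.Periodic f 1) :
    Function.Periodic (f ∘ φ) 1 := fun x => by
  simp only [Function.comp_apply, hφ.map_add_one, hf (φ x)]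

lemma periodic_deriv (hφ : IsCircleDiffeoLift φ) : Function.Periodic (deriv φ) 1 := fun x => by
  rw [← deriv_comp_add_const, funext hφ.map_add_one, deriv_add_const]

lemma exists_deriv_mem_Icc (hφ : IsCircleDiffeoLift φ) :
    ∃ m L, 0 < m ∧ ∀ x, deriv φ x ∈ Icc m L := by
  have hrange : IsCompact (range (deriv φ)) :=
    hφ.periodic_deriv.compact_of_continuous one_ne_zero hφ.continuous_deriv
  obtain ⟨_, ⟨a, rfl⟩, ha⟩ := hrange.exists_isLeast (range_nonempty _)
  obtain ⟨L, hL⟩ := hrange.bddAbove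
  exact ⟨deriv φ a, L, hφ.deriv_pos a, fun x => ⟨ha (mem_range_self x), hL (mem_range_self x)⟩⟩

lemma dT_map_le (hφ : IsCircleDiffeoLift φ) {L : ℝ} (hL : ∀ x, deriv φ x ≤ L) (x y : ℝ) :
    dT (φ x) (φ y) ≤ L * dT x y := by
  set k := round (x - y)
  calc dT (φ x) (φ y) ≤ |φ x - φ y - k| := dT_le_abs_sub_sub_intCast _ _ k
    _ = ‖φ x - φ (y + k)‖ := by rw [hφ.map_add_intCast, ← sub_sub, Real.norm_eq_abs]
    _ ≤ L * ‖x - (y + k)‖ := convex_univ.norm_image_sub_le_of_norm_deriv_le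
        (fun z _ => hφ.differentiable z)
        (fun z _ => (Real.norm_of_nonneg (hφ.deriv_pos z).le).trans_le (hL z))
        (mem_univ _) (mem_univ _)
    _ = L * dT x y := by rw [dT_eq_abs_sub_round, ← sub_sub, Real.norm_eq_abs]

lemma injOn_comp (hφ : IsCircleDiffeoLift φ) {f : ℝ → α} (hp : Function.Periodic f 1)
    (hf : InjOn f I01) : InjOn (f ∘ φ) I01 := by
  rw [injOn_I01_iff (hφ.periodic_comp hp)]
  intro x y hxy
  obtain ⟨k, hk⟩ := (injOn_I01_iff hp).1 hf (φ x) (φ y) hxy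
  exact ⟨k, hφ.strictMono.injective (by rw [hk, hφ.map_add_intCast])⟩

lemma image_Ioc (hφ : IsCircleDiffeoLift φ) : φ '' Ioc 0 1 = Ioc (φ 0) (φ 0 + 1) := by
  have hφ1 : φ 1 = φ 0 + 1 := by simpa using hφ.map_add_one 0
  rw [← hφ1]
  refine Subset.antisymm ?_ (intermediate_value_Ioc zero_le_one hφ.contDiff.continuous.continuousOn)
  rintro _ ⟨x, hx, rfl⟩
  exact ⟨hφ.strictMono hx.1, hφ.strictMono.monotone hx.2⟩

lemma lintegral_comp (hφ : IsCircleDiffeoLift φ) {f : ℝ → ℝ≥0∞} (hf : Function.Periodic f 1) :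
    ∫⁻ x in I01, ENNReal.ofReal (deriv φ x) * f (φ x) = ∫⁻ x in I01, f x := by
  rw [restrict_I01, ← lintegral_image_eq_lintegral_deriv_mul_of_monotoneOn measurableSet_Ioc
    (fun x _ => (hφ.differentiable x).hasDerivAt.hasDerivWithinAt)
    (hφ.strictMono.monotone.monotoneOn _), hφ.image_Ioc, setLIntegral_Ioc_eq_I01 hf, restrict_I01]

lemma lintegral_lintegral_comp (hφ : IsCircleDiffeoLift φ) {F : ℝ → ℝ → ℝ≥0∞}
    (hF : IsBiperiodic F) :
    ∫⁻ x in I01, ∫⁻ y in I01, ENNReal.ofReal (deriv φ x * deriv φ y) * F (φ x) (φ y) =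
      ∫⁻ x in I01, ∫⁻ y in I01, F x y := by
  have inner_eq (x : ℝ) :
      ∫⁻ y in I01, ENNReal.ofReal (deriv φ x * deriv φ y) * F (φ x) (φ y) =
        ENNReal.ofReal (deriv φ x) * ∫⁻ y in I01, F (φ x) y := by
    simp only [ENNReal.ofReal_mul (hφ.deriv_pos x).le, mul_assoc]
    rw [lintegral_const_mul' _ _ ENNReal.ofReal_ne_top, hφ.lintegral_comp (hF.right (φ x))]
  simp only [inner_eq]
  exact hφ.lintegral_comp (f := fun x => ∫⁻ y in I01, F x y) fun x => by simp only [hF.left]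

variable [NormedSpace ℝ E]

lemma integral_comp (hφ : IsCircleDiffeoLift φ) {f : ℝ → E} (hf : Function.Periodic f 1) :
    ∫ x in I01, deriv φ x • f (φ x) = ∫ x in I01, f x := by
  rw [restrict_I01, ← integral_image_eq_integral_deriv_smul_of_monotoneOn measurableSet_Ioc
    (fun x _ => (hφ.differentiable x).hasDerivAt.hasDerivWithinAt)
    (hφ.strictMono.monotone.monotoneOn _), hφ.image_Ioc, setIntegral_Ioc_eq_I01 hf, restrict_I01]

lemma integral_integral_comp (hφ : IsCircleDiffeoLift φ) {F : ℝ → ℝ → E} (hF : IsBiperiodic F) :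
    ∫ x in I01, ∫ y in I01, (deriv φ x * deriv φ y) • F (φ x) (φ y) =
      ∫ x in I01, ∫ y in I01, F x y := by
  simp only [mul_smul, integral_smul, hφ.integral_comp (hF.right _)]
  exact hφ.integral_comp (f := fun x => ∫ y in I01, F x y) fun x => by simp only [hF.left]

end ChangeOfVariables

end IsCircleDiffeoLift

section Gagliardo

variable {𝕜 E : Type*} [NormedAddCommGroup E]

lemma norm_smul_sub_smul_sq_le [NormedField 𝕜] [NormedSpace 𝕜 E] (a b : 𝕜) (v w : E) :
    ‖a • v - b • w‖ ^ 2 ≤ 2 * ‖v‖ ^ 2 * ‖a - b‖ ^ 2 + 2 * ‖b‖ ^ 2 * ‖v - w‖ ^ 2 := by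
  have hnorm : ‖a • v - b • w‖ ≤ ‖a - b‖ * ‖v‖ + ‖b‖ * ‖v - w‖ := by
    rw [← norm_smul, ← norm_smul, show a • v - b • w = (a - b) • v + b • (v - w) by module]
    exact norm_add_le _ _
  calc ‖a • v - b • w‖ ^ 2 ≤ (‖a - b‖ * ‖v‖ + ‖b‖ * ‖v - w‖) ^ 2 := by gcongr
    _ ≤ 2 * ((‖a - b‖ * ‖v‖) ^ 2 + (‖b‖ * ‖v - w‖) ^ 2) := add_sq_le
    _ = _ := by ring

lemma lintegral_lintegral_add_left {α β : Type*} [MeasurableSpace α] [MeasurableSpace β]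
    {μ : Measure α} {ν : Measure β} [SFinite ν] {F : α → β → ℝ≥0∞}
    (hF : Measurable (Function.uncurry F)) (G : α → β → ℝ≥0∞) :
    ∫⁻ x, ∫⁻ y, F x y + G x y ∂ν ∂μ = ∫⁻ x, ∫⁻ y, F x y ∂ν ∂μ + ∫⁻ x, ∫⁻ y, G x y ∂ν ∂μ := by
  rw [← lintegral_add_left hF.lintegral_prod_right]
  exact lintegral_congr fun x => lintegral_add_left (hF.comp measurable_prodMk_left) _

lemma measurable_gagliardo_kernel {σ : ℝ} {f : ℝ → E} (hf : Continuous f) :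
    Measurable (Function.uncurry fun x y =>
      ENNReal.ofReal (‖f y - f x‖ ^ 2 / dT x y ^ (2 * σ + 1))) := by
  have hnum : Continuous fun p : ℝ × ℝ => ‖f p.2 - f p.1‖ ^ 2 := by fun_prop
  exact (hnum.measurable.div (continuous_dT.measurable.pow_const _)).ennreal_ofReal

lemma gagliardoSqE_smul_le [NormedField 𝕜] [NormedSpace 𝕜 E] {σ C L : ℝ} {f : ℝ → 𝕜} {w : ℝ → E}
    (hf : Continuous f) (hfL : ∀ x, ‖f x‖ ≤ L) (hwC : ∀ x, ‖w x‖ ≤ C) :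
    gagliardoSqE σ (fun x => f x • w x) ≤
      ENNReal.ofReal (2 * C ^ 2) * gagliardoSqE σ f +
        ENNReal.ofReal (2 * L ^ 2) * gagliardoSqE σ w := by
  have hpow (x y : ℝ) : 0 ≤ dT x y ^ (2 * σ + 1) := Real.rpow_nonneg (dT_nonneg x y) _
  have hpointwise (x y : ℝ) :
      ENNReal.ofReal (‖f y • w y - f x • w x‖ ^ 2 / dT x y ^ (2 * σ + 1)) ≤
        ENNReal.ofReal (2 * C ^ 2) * ENNReal.ofReal (‖f y - f x‖ ^ 2 / dT x y ^ (2 * σ + 1)) +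
          ENNReal.ofReal (2 * L ^ 2) *
            ENNReal.ofReal (‖w y - w x‖ ^ 2 / dT x y ^ (2 * σ + 1)) := by
    have hdiv (N : ℝ) (hN : 0 ≤ N) : 0 ≤ N / dT x y ^ (2 * σ + 1) := div_nonneg hN (hpow x y)
    rw [← ENNReal.ofReal_mul (by positivity), ← ENNReal.ofReal_mul (by positivity),
      ← ENNReal.ofReal_add (mul_nonneg (by positivity) (hdiv _ (by positivity)))
        (mul_nonneg (by positivity) (hdiv _ (by positivity))), ← mul_div_assoc, ← mul_div_assoc,
      ← add_div]
    refine ENNReal.ofReal_le_ofReal (div_le_div_of_nonneg_right ?_ (hpow x y))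
    calc ‖f y • w y - f x • w x‖ ^ 2
        ≤ 2 * ‖w y‖ ^ 2 * ‖f y - f x‖ ^ 2 + 2 * ‖f x‖ ^ 2 * ‖w y - w x‖ ^ 2 :=
          norm_smul_sub_smul_sq_le _ _ _ _
      _ ≤ 2 * C ^ 2 * ‖f y - f x‖ ^ 2 + 2 * L ^ 2 * ‖w y - w x‖ ^ 2 := by
          gcongr
          exacts [hwC y, hfL x]
  refine (lintegral_mono fun x => lintegral_mono fun y => hpointwise x y).trans_eq ?_
  rw [lintegral_lintegral_add_left ((measurable_gagliardo_kernel hf).const_mul _)]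
  simp only [gagliardoSqE, lintegral_const_mul' _ _ ENNReal.ofReal_ne_top]

lemma IsCircleDiffeoLift.gagliardoSqE_comp_le {φ : ℝ → ℝ} (hφ : IsCircleDiffeoLift φ)
    {σ m L : ℝ} (hσ : 0 ≤ 2 * σ + 1) (hm : 0 < m) (hmL : ∀ x, deriv φ x ∈ Icc m L) {w : ℝ → E}
    (hw : Function.Periodic w 1) :
    gagliardoSqE σ (w ∘ φ) ≤ ENNReal.ofReal (L ^ (2 * σ + 1) / m ^ 2) * gagliardoSqE σ w := by
  set q := 2 * σ + 1
  have hL : 0 < L := hm.trans_le ((hmL 0).1.trans (hmL 0).2)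
  have hkernel (x y : ℝ) : ‖w (φ y) - w (φ x)‖ ^ 2 / dT x y ^ q ≤
      L ^ q * (‖w (φ y) - w (φ x)‖ ^ 2 / dT (φ x) (φ y) ^ q) := by
    rcases (dT_nonneg (φ x) (φ y)).eq_or_lt' with hzero | hpos
    · simp [eq_of_dT_eq_zero hw hzero]
    have hlip : dT (φ x) (φ y) ≤ L * dT x y := hφ.dT_map_le (fun z => (hmL z).2) x y
    have hdT : 0 < dT x y := pos_of_mul_pos_right (hpos.trans_le hlip) hL.le
    have hpow : dT (φ x) (φ y) ^ q ≤ L ^ q * dT x y ^ q := by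
      rw [← Real.mul_rpow hL.le hdT.le]
      exact Real.rpow_le_rpow hpos.le hlip hσ
    rw [← mul_div_assoc, div_le_div_iff₀ (by positivity) (by positivity)]
    nlinarith [mul_le_mul_of_nonneg_left hpow (sq_nonneg ‖w (φ y) - w (φ x)‖)]
  have hjacobian (x y : ℝ) : 1 ≤ deriv φ x * deriv φ y / m ^ 2 := by
    rw [one_le_div (by positivity), sq]
    exact mul_le_mul (hmL x).1 (hmL y).1 hm.le (hφ.deriv_pos x).le
  have hpointwise (x y : ℝ) : ENNReal.ofReal (‖w (φ y) - w (φ x)‖ ^ 2 / dT x y ^ q) ≤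
      ENNReal.ofReal (L ^ q / m ^ 2) * (ENNReal.ofReal (deriv φ x * deriv φ y) *
        ENNReal.ofReal (‖w (φ y) - w (φ x)‖ ^ 2 / dT (φ x) (φ y) ^ q)) := by
    have hnonneg : 0 ≤ L ^ q * (‖w (φ y) - w (φ x)‖ ^ 2 / dT (φ x) (φ y) ^ q) :=
      mul_nonneg (by positivity)
        (div_nonneg (by positivity) (Real.rpow_nonneg (dT_nonneg _ _) _))
    rw [← ENNReal.ofReal_mul (mul_pos (hφ.deriv_pos x) (hφ.deriv_pos y)).le,
      ← ENNReal.ofReal_mul (by positivity)]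
    refine ENNReal.ofReal_le_ofReal (((hkernel x y).trans
      (le_mul_of_one_le_right hnonneg (hjacobian x y))).trans_eq (by ring))
  refine (lintegral_mono fun x => lintegral_mono fun y => hpointwise x y).trans_eq ?_
  simp only [lintegral_const_mul' _ _ ENNReal.ofReal_ne_top]
  rw [hφ.lintegral_lintegral_comp
    (F := fun x y => ENNReal.ofReal (‖w y - w x‖ ^ 2 / dT x y ^ q))
    ⟨fun x y => by simp only [dT_add_one_left, hw x],
      fun x y => by simp only [dT_add_one_right, hw y]⟩]
  rfl

end Gagliardo

section Reparameterization

variable {n : ℕ} {s : ℝ} {φ : ℝ → ℝ} {γ u v : ℝ → En n}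

/-- A closed curve of class `C¹` in `ℝⁿ`, not necessarily immersed or embedded, expressed as a
`1`-periodic function on `ℝ`. -/
structure IsC1Loop (u : ℝ → En n) : Prop where
  periodic : Function.Periodic u 1
  contDiff : ContDiff ℝ 1 u

lemma InHs.isC1Loop (hu : InHs s u) : IsC1Loop u := ⟨hu.1, hu.2.1⟩

namespace IsC1Loop

lemma differentiable (hu : IsC1Loop u) : Differentiable ℝ u :=
  hu.contDiff.differentiable one_ne_zero

lemma periodic_deriv (hu : IsC1Loop u) : Function.Periodic (deriv u) 1 :=
  _root_.periodic_deriv hu.periodic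

end IsC1Loop

lemma deriv_comp_eq_smul (hφ : Differentiable ℝ φ) (hu : Differentiable ℝ u) (x : ℝ) :
    deriv (u ∘ φ) x = deriv φ x • deriv u (φ x) :=
  deriv.scomp x (hu _) (hφ x)

lemma IsCircleDiffeoLift.norm_deriv_comp (hφ : IsCircleDiffeoLift φ) (hu : Differentiable ℝ u)
    (x : ℝ) : ‖deriv (u ∘ φ) x‖ = deriv φ x * ‖deriv u (φ x)‖ := by
  rw [deriv_comp_eq_smul hφ.differentiable hu, norm_smul, Real.norm_of_nonneg (hφ.deriv_pos x).le]

lemma InHs.comp (hs : 1 / 2 ≤ s) (hφ : IsCircleDiffeoLift φ)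
    (hφs : gagliardoSqE (s - 1) (deriv φ) < ⊤) (hu : InHs s u) : InHs s (u ∘ φ) := by
  have hloop := hu.isC1Loop
  refine ⟨hφ.periodic_comp hloop.periodic, hloop.contDiff.comp hφ.contDiff, ?_⟩
  obtain ⟨m, L, hm, hmL⟩ := hφ.exists_deriv_mem_Icc
  obtain ⟨C, hC⟩ := exists_norm_le_of_periodic (hloop.contDiff.continuous_deriv le_rfl)
    hloop.periodic_deriv
  have hderiv : deriv (u ∘ φ) = fun x => deriv φ x • (deriv u ∘ φ) x :=
    funext (deriv_comp_eq_smul hφ.differentiable hloop.differentiable)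
  have hφL (x : ℝ) : ‖deriv φ x‖ ≤ L :=
    (Real.norm_of_nonneg (hφ.deriv_pos x).le).trans_le (hmL x).2
  have hcomp : gagliardoSqE (s - 1) (deriv u ∘ φ) < ⊤ :=
    (hφ.gagliardoSqE_comp_le (by linarith) hm hmL hloop.periodic_deriv).trans_lt
      (ENNReal.mul_lt_top ENNReal.ofReal_lt_top hu.2.2)
  rw [hderiv]
  exact (gagliardoSqE_smul_le hφ.continuous_deriv hφL fun x => hC (φ x)).trans_lt
    (ENNReal.add_lt_top.2 ⟨ENNReal.mul_lt_top ENNReal.ofReal_lt_top hφs,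
      ENNReal.mul_lt_top ENNReal.ofReal_lt_top hcomp⟩)

lemma InM.comp (hs : 1 / 2 ≤ s) (hφ : IsCircleDiffeoLift φ)
    (hφs : gagliardoSqE (s - 1) (deriv φ) < ⊤) (hγ : InM s γ) : InM s (γ ∘ φ) := by
  obtain ⟨hγs, hinj, himm⟩ := hγ
  refine ⟨hγs.comp hs hφ hφs, hφ.injOn_comp hγs.isC1Loop.periodic hinj, fun x => ?_⟩
  rw [deriv_comp_eq_smul hφ.differentiable hγs.isC1Loop.differentiable]
  exact smul_ne_zero (hφ.deriv_pos x).ne' (himm _)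

namespace IsC1Loop

lemma periodic_Dg (hγ : IsC1Loop γ) (hu : IsC1Loop u) : Function.Periodic (Dg γ u) 1 := fun x => by
  simp only [Dg, hγ.periodic_deriv x, hu.periodic_deriv x]

lemma isBiperiodic_Rop (hγ : IsC1Loop γ) (hu : IsC1Loop u) : IsBiperiodic (Rop s γ u) where
  left x y := by
    simp only [Rop, DDg, hγ.periodic x, hu.periodic x, hγ.periodic_deriv x, hu.periodic_deriv x]
  right x y := by simp only [Rop, hγ.periodic y, hu.periodic y]

lemma isBiperiodic_muW (hγ : IsC1Loop γ) : IsBiperiodic (muW γ) where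
  left x y := by simp only [muW, hγ.periodic x, hγ.periodic_deriv x]
  right x y := by simp only [muW, hγ.periodic y, hγ.periodic_deriv y]

end IsC1Loop

namespace IsCircleDiffeoLift

lemma Dg_comp (hφ : IsCircleDiffeoLift φ) (hγ : Differentiable ℝ γ) (hu : Differentiable ℝ u)
    (x : ℝ) : Dg (γ ∘ φ) (u ∘ φ) x = Dg γ u (φ x) := by
  rw [Dg, Dg, hφ.norm_deriv_comp hγ, deriv_comp_eq_smul hφ.differentiable hu, smul_smul, mul_inv,
    mul_right_comm, inv_mul_cancel₀ (hφ.deriv_pos x).ne', one_mul]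

lemma DDg_comp (hφ : IsCircleDiffeoLift φ) (hγ : Differentiable ℝ γ) (hu : Differentiable ℝ u)
    (x : ℝ) : DDg (γ ∘ φ) (u ∘ φ) x = DDg γ u (φ x) := by
  have hφx : deriv φ x ≠ 0 := (hφ.deriv_pos x).ne'
  ext1 w
  rw [DDg, DDg, hφ.norm_deriv_comp hγ, deriv_comp_eq_smul hφ.differentiable hγ,
    deriv_comp_eq_smul hφ.differentiable hu, real_inner_smul_left, smul_smul]
  congr 1
  field_simp

lemma Rop_comp (hφ : IsCircleDiffeoLift φ) (hγ : Differentiable ℝ γ) (hu : Differentiable ℝ u)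
    (x y : ℝ) : Rop s (γ ∘ φ) (u ∘ φ) x y = Rop s γ u (φ x) (φ y) := by
  simp only [Rop, hφ.DDg_comp hγ hu, Function.comp_apply]

lemma muW_comp (hφ : IsCircleDiffeoLift φ) (hγ : Differentiable ℝ γ) (x y : ℝ) :
    muW (γ ∘ φ) x y = deriv φ x * deriv φ y * muW γ (φ x) (φ y) := by
  simp only [muW, hφ.norm_deriv_comp hγ, Function.comp_apply]
  ring

lemma integral_eq_of_density (hφ : IsCircleDiffeoLift φ) {f g : ℝ → ℝ}
    (hf : Function.Periodic f 1) (hg : ∀ x, g x = deriv φ x * f (φ x)) :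
    ∫ x in I01, g x = ∫ x in I01, f x := by
  simp only [hg]
  exact hφ.integral_comp hf

lemma integral_integral_eq_of_density (hφ : IsCircleDiffeoLift φ) {F G : ℝ → ℝ → ℝ}
    (hF : IsBiperiodic F) (hG : ∀ x y, G x y = deriv φ x * deriv φ y * F (φ x) (φ y)) :
    ∫ x in I01, ∫ y in I01, G x y = ∫ x in I01, ∫ y in I01, F x y := by
  simp only [hG]
  exact hφ.integral_integral_comp hF

lemma innerL2g_comp (hφ : IsCircleDiffeoLift φ) (hγ : IsC1Loop γ) (hu : Function.Periodic u 1)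
    (hv : Function.Periodic v 1) : innerL2g (γ ∘ φ) (u ∘ φ) (v ∘ φ) = innerL2g γ u v :=
  hφ.integral_eq_of_density (fun x => by simp only [hu x, hv x, hγ.periodic_deriv x])
    fun x => by
      rw [hφ.norm_deriv_comp hγ.differentiable, Function.comp_apply, Function.comp_apply,
        mul_left_comm]

lemma innerH1g_comp (hφ : IsCircleDiffeoLift φ) (hγ : IsC1Loop γ) (hu : IsC1Loop u)
    (hv : IsC1Loop v) : innerH1g (γ ∘ φ) (u ∘ φ) (v ∘ φ) = innerH1g γ u v :=
  hφ.integral_eq_of_density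
    (fun x => by simp only [hγ.periodic_Dg hu x, hγ.periodic_Dg hv x, hγ.periodic_deriv x])
    fun x => by
      rw [hφ.norm_deriv_comp hγ.differentiable, hφ.Dg_comp hγ.differentiable hu.differentiable,
        hφ.Dg_comp hγ.differentiable hv.differentiable, mul_left_comm]

lemma B1_comp (hφ : IsCircleDiffeoLift φ) (hγ : IsC1Loop γ) (hu : IsC1Loop u) (hv : IsC1Loop v) :
    B1 s (γ ∘ φ) (u ∘ φ) (v ∘ φ) = B1 s γ u v :=
  have hRu := hγ.isBiperiodic_Rop (s := s) hu
  have hRv := hγ.isBiperiodic_Rop (s := s) hv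
  have hμ := hγ.isBiperiodic_muW
  hφ.integral_integral_eq_of_density
    ⟨fun x y => by simp only [hRu.left, hRv.left, hμ.left],
      fun x y => by simp only [hRu.right, hRv.right, hμ.right]⟩
    fun x y => by
      rw [hφ.Rop_comp hγ.differentiable hu.differentiable,
        hφ.Rop_comp hγ.differentiable hv.differentiable, hφ.muW_comp hγ.differentiable,
        mul_left_comm]

lemma B2_comp (hφ : IsCircleDiffeoLift φ) (hγ : IsC1Loop γ) (hu : Function.Periodic u 1)
    (hv : Function.Periodic v 1) : B2 s (γ ∘ φ) (u ∘ φ) (v ∘ φ) = B2 s γ u v :=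
  have hR := hγ.isBiperiodic_Rop (s := s) hγ
  have hμ := hγ.isBiperiodic_muW
  hφ.integral_integral_eq_of_density
    ⟨fun x y => by simp only [hR.left, hμ.left, hγ.periodic x, hu x, hv x],
      fun x y => by simp only [hR.right, hμ.right, hγ.periodic y, hu y, hv y]⟩
    fun x y => by
      rw [hφ.Rop_comp hγ.differentiable hγ.differentiable, hφ.muW_comp hγ.differentiable,
        mul_left_comm]
      rfl

lemma B3_comp (hφ : IsCircleDiffeoLift φ) (hγ : IsC1Loop γ) (hu : IsC1Loop u) (hv : IsC1Loop v) :
    B3 s (γ ∘ φ) (u ∘ φ) (v ∘ φ) = B3 s γ u v :=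
  have hR := hγ.isBiperiodic_Rop (s := s) hγ
  have hμ := hγ.isBiperiodic_muW
  have hDu := hγ.periodic_Dg hu
  have hDv := hγ.periodic_Dg hv
  hφ.integral_integral_eq_of_density
    ⟨fun x y => by simp only [hR.left, hμ.left, hDu x, hDv x],
      fun x y => by simp only [hR.right, hμ.right, hDu y, hDv y]⟩
    fun x y => by
      simp only [hφ.Rop_comp hγ.differentiable hγ.differentiable, hφ.muW_comp hγ.differentiable,
        hφ.Dg_comp hγ.differentiable hu.differentiable,
        hφ.Dg_comp hγ.differentiable hv.differentiable]
      rw [mul_left_comm]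

lemma Gmet_comp (hφ : IsCircleDiffeoLift φ) (hγ : IsC1Loop γ) (hu : IsC1Loop u)
    (hv : IsC1Loop v) : Gmet s (γ ∘ φ) (u ∘ φ) (v ∘ φ) = Gmet s γ u v := by
  simp only [Gmet, hφ.B1_comp hγ hu hv, hφ.B2_comp hγ hu.periodic hv.periodic,
    hφ.B3_comp hγ hu hv, hφ.innerH1g_comp hγ hu hv,
    hφ.innerL2g_comp hγ hu.periodic hv.periodic]

end IsCircleDiffeoLift

end Reparameterization

theorem statement6_general {s : ℝ} (hs : 1 / 2 ≤ s) {n : ℕ} {φ : ℝ → ℝ}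
    (hφ : IsCircleDiffeoLift φ) (hφs : gagliardoSqE (s - 1) (deriv φ) < ⊤) {γ : ℝ → En n}
    (hγ : InM s γ) :
    InM s (γ ∘ φ) ∧
      ∀ u v : ℝ → En n, InHs s u → InHs s v →
        Gmet s (γ ∘ φ) (u ∘ φ) (v ∘ φ) = Gmet s γ u v :=
  ⟨hγ.comp hs hφ hφs, fun _ _ hu hv => hφ.Gmet_comp hγ.1.isC1Loop hu.isC1Loop hv.isC1Loop⟩

/-- reparameterization invariance of `G`: if `φ` is an
orientation-preserving `C¹`-diffeomorphism of `𝕋` of class `H^s` (modelled by a lift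
`φ : ℝ → ℝ` with `φ(x+1) = φ(x)+1`, `φ' > 0` and `[φ']_{H^{s-1}} < ∞`) and `γ ∈ 𝓜`,
then also `γ∘φ ∈ 𝓜` and `G_{γ∘φ}(u∘φ, v∘φ) = G_γ(u,v)` for all `u, v ∈ H^s(𝕋,ℝⁿ)`. -/
theorem statement6 (s : ℝ) (hs : s ∈ Set.Ioo (3 / 2 : ℝ) 2) (n : ℕ) (hn : 2 ≤ n)
    (φ : ℝ → ℝ) (hφ1 : ContDiff ℝ 1 φ) (hφ2 : ∀ x, 0 < deriv φ x)
    (hφ3 : ∀ x, φ (x + 1) = φ x + 1) (hφ4 : gagliardoSqE (s - 1) (deriv φ) < ⊤)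
    (γ : ℝ → En n) (hγ : InM s γ) :
    InM s (γ ∘ φ) ∧
      ∀ u v : ℝ → En n, InHs s u → InHs s v →
        Gmet s (γ ∘ φ) (u ∘ φ) (v ∘ φ) = Gmet s γ u v := by
  exact statement6_general (by linarith [hs.1]) ⟨hφ1, hφ2, hφ3⟩ hφ4 hγ
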